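/- Let α, β, δ, a₁, a₂, a₃ be real constants and A₁, A₂, A₃ smooth positive functions on an open interval I satisfying a_μ + (α t + β)·A_μ'(t)/A_μ(t) = δ for all t ∈ I and each μ = 1,2,3. Set u = (−1,0,0,0) (a constant covector field) and h(t,x,y,z) = diag(0, A₁(t)², A₂(t)², A₃(t)²). Then the vector field X with components (X⁰,X¹,X²,X³)(t,x,y,z) = (α t + β, a₁·x, a₂·y, a₃·z) satisfies L_X u = α u and L_X h = 2δ h on I × ℝ³; that is, X is a kinematic self-similar vector of the Bianchi I space-time with comoving fluid velocity. -/

import Mathlib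

/-- Partial derivative `∂_a f` on ℝ⁴ (coordinates indexed by `Fin 4`). -/
noncomputable def pderiv4 (a : Fin 4) (f : (Fin 4 → ℝ) → ℝ) (p : Fin 4 → ℝ) : ℝ :=
  fderiv ℝ f p (Pi.single a 1)

/-- Lie derivative of a covector field `u` along the vector field `X`:
`(L_X u)_a = Σ_c X^c ∂_c u_a + Σ_c u_c ∂_a X^c`. -/
noncomputable def lieDerivCov (X : (Fin 4 → ℝ) → Fin 4 → ℝ)
    (u : (Fin 4 → ℝ) → Fin 4 → ℝ) (p : Fin 4 → ℝ) : Fin 4 → ℝ :=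
  fun a =>
    (∑ c, X p c * pderiv4 c (fun q => u q a) p)
      + (∑ c, u p c * pderiv4 a (fun q => X q c) p)

/-- Lie derivative of a (0,2)-tensor field `T` along the vector field `X`:
`(L_X T)_{ab} = Σ_c X^c ∂_c T_{ab} + Σ_c T_{cb} ∂_a X^c + Σ_c T_{ac} ∂_b X^c`. -/
noncomputable def lieDerivT (X : (Fin 4 → ℝ) → Fin 4 → ℝ)
    (T : (Fin 4 → ℝ) → Matrix (Fin 4) (Fin 4) ℝ) (p : Fin 4 → ℝ) :
    Matrix (Fin 4) (Fin 4) ℝ :=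
  Matrix.of fun a b =>
    (∑ c, X p c * pderiv4 c (fun q => T q a b) p)
      + (∑ c, T p c b * pderiv4 a (fun q => X q c) p)
      + (∑ c, T p a c * pderiv4 b (fun q => X q c) p)

theorem pderiv4_const (b : Fin 4) (k : ℝ) (p : Fin 4 → ℝ) :
    pderiv4 b (fun _ => k) p = 0 := by
  simp [pderiv4]

theorem pderiv4_comp (b i : Fin 4) (f : ℝ → ℝ) (f' : ℝ) (p : Fin 4 → ℝ)
    (hf : HasDerivAt f f' (p i)) :
    pderiv4 b (fun q => f (q i)) p = if i = b then f' else 0 := by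
  have h1 : HasFDerivAt (fun q : Fin 4 → ℝ => q i)
      (ContinuousLinearMap.proj (R := ℝ) (φ := fun _ : Fin 4 => ℝ) i) p :=
    hasFDerivAt_apply i p
  have h2 : HasFDerivAt (fun q : Fin 4 → ℝ => f (q i)) _ p := hf.comp_hasFDerivAt p h1
  rw [pderiv4, h2.fderiv]
  simp [Pi.single_apply]

/-- If the Bianchi I metric functions satisfy `a_μ + (αt + β) A_μ'/A_μ = δ`, then
`X = (αt + β)∂_t + a₁x∂_x + a₂y∂_y + a₃z∂_z` is a kinematic self-similar vector of the
comoving fluid: `L_X u = α u` and `L_X h = 2δ h`, where `u = (-1,0,0,0)` and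
`h = diag(0, A₁², A₂², A₃²)`. -/
theorem bianchiI_kinematic_self_similarity
    (I : Set ℝ) (hIopen : IsOpen I) (hIconn : I.OrdConnected)
    (α β δ : ℝ) (a : Fin 3 → ℝ)
    (A : Fin 3 → ℝ → ℝ) (hA : ∀ μ : Fin 3, ContDiff ℝ (⊤ : ℕ∞) (A μ))
    (hApos : ∀ (μ : Fin 3), ∀ t ∈ I, 0 < A μ t)
    (hKSS : ∀ (μ : Fin 3), ∀ t ∈ I,
      a μ + (α * t + β) * deriv (A μ) t / A μ t = δ)
    (u : (Fin 4 → ℝ) → Fin 4 → ℝ) (hu : ∀ p : Fin 4 → ℝ, u p = ![(-1 : ℝ), 0, 0, 0])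
    (h : (Fin 4 → ℝ) → Matrix (Fin 4) (Fin 4) ℝ)
    (hh : ∀ p : Fin 4 → ℝ,
      h p = Matrix.diagonal ![(0 : ℝ), (A 0 (p 0)) ^ 2, (A 1 (p 0)) ^ 2, (A 2 (p 0)) ^ 2])
    (X : (Fin 4 → ℝ) → Fin 4 → ℝ)
    (hX : ∀ p : Fin 4 → ℝ, X p = ![α * p 0 + β, a 0 * p 1, a 1 * p 2, a 2 * p 3]) :
    ∀ p : Fin 4 → ℝ, p 0 ∈ I →
      lieDerivCov X u p = α • u p ∧ lieDerivT X h p = (2 * δ) • h p := by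
  intro p hp
  have d0 : ∀ b, pderiv4 b (fun q => α * q 0 + β) p = if 0 = b then α else 0 := fun b =>
    pderiv4_comp b 0 (fun t => α * t + β) α p
      (by simpa using ((hasDerivAt_id (p 0)).const_mul α).add_const β)
  have d1 : ∀ (b i : Fin 4) (k : ℝ), pderiv4 b (fun q => k * q i) p = if i = b then k else 0 :=
    fun b i k => pderiv4_comp b i (fun t => k * t) k p
      (by simpa using (hasDerivAt_id (p i)).const_mul k)
  have dA : ∀ (b : Fin 4) (μ : Fin 3), pderiv4 b (fun q => (A μ (q 0)) ^ 2) p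
      = if 0 = b then 2 * A μ (p 0) * deriv (A μ) (p 0) else 0 := fun b μ =>
    pderiv4_comp b 0 (fun t => (A μ t) ^ 2) _ p
      (by simpa using (((hA μ).differentiable (by simp)) (p 0)).hasDerivAt.fun_pow 2)
  have key : ∀ μ : Fin 3, (α * p 0 + β) * deriv (A μ) (p 0) = (δ - a μ) * A μ (p 0) := by
    intro μ
    have h1 := hKSS μ _ hp
    have h2 := (hApos μ _ hp).ne'
    field_simp at h1
    linarith
  constructor
  · funext i
    fin_cases i <;> simp [lieDerivCov, hu, hX, Fin.sum_univ_four, pderiv4_const, d0, d1]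
  · ext i j
    fin_cases i <;> fin_cases j <;>
      simp [lieDerivT, hh, hX, Fin.sum_univ_four, pderiv4_const, d0, d1, dA,
        Matrix.diagonal_apply]
    · linear_combination 2 * A 0 (p 0) * key 0
    · linear_combination 2 * A 1 (p 0) * key 1
    · linear_combination 2 * A 2 (p 0) * key 2
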